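/- There exist real numbers u0, u1, x1, x2 with 1.08 < u0 < 1.09, 0.69 < u1 < 0.70, 0.93 < x1 < 0.94 and 1.02 < x2 < 1.03 such that f1 = f2 = f3 = f4 = 0. (This solution gives the first known non-naturally reductive left-invariant Einstein metric on the compact Lie group G2; note that on such a solution u0 ≠ x2, x1 ≠ 1 and x1 ≠ x2, so none of the naturally reductive conditions holds.) -/

import Mathlib

noncomputable def f1 (u0 u1 x1 x2 : ℝ) : ℝ :=
  9*u0*u1*x1 ^ 2*x2 ^ 2 + 2*u0*u1*x1 ^ 2 + u0*u1*x2 ^ 2 - 3*u1 ^ 2*x1 ^ 2*x2 ^ 2 - 3*u1 ^ 2*x2 ^ 2 - 6*x1 ^ 2*x2 ^ 2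

noncomputable def f2 (u0 u1 x1 x2 : ℝ) : ℝ :=
  u0*u1*x2 + 6*u1 ^ 2*x1 ^ 2*x2 + 15*u1 ^ 2*x2 - 6*u1*x1 ^ 3 + 6*u1*x1*x2 ^ 2 - 48*u1*x1*x2 + 6*u1*x1 + 8*u1*x2 ^ 2 + 12*x1 ^ 2*x2

noncomputable def f3 (u0 u1 x1 x2 : ℝ) : ℝ :=
  4*u0*x1 ^ 2 - u0*x2 ^ 2 - 9*u1*x2 ^ 2 + 18*x1 ^ 3*x2 - 32*x1 ^ 2*x2 - 18*x1*x2 ^ 3 + 48*x1*x2 ^ 2 + 6*x1*x2 - 16*x2 ^ 3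

noncomputable def f4 (u0 u1 x1 x2 : ℝ) : ℝ :=
  9*u0*x1 ^ 2*x2 ^ 2 - 4*u0*x1 ^ 2 + 9*u1*x1 ^ 2*x2 ^ 2 - 6*x1 ^ 3*x2 - 48*x1 ^ 2*x2 ^ 2 + 32*x1 ^ 2*x2 + 18*x1*x2 ^ 3 - 18*x1*x2 + 8*x2 ^ 3

/-!
A Newton–Kantorovich argument. Let `F = (f1, f2, f3, f4)`, let `b` be a numerical solution to seven
digits and let `A` be a numerical inverse of the Jacobian of `F` at `b`. On a ball around `b` the
derivative of `A ∘ F` stays close to the identity, so the image of this ball under `A ∘ F` covers a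
ball around `A (F b)` that contains `0`. The Jacobian is enclosed on the ball by splitting every entry into
its positive and negative monomials, which are monotone on the positive orthant.
-/

open Metric Set
open scoped NNReal

attribute [local instance] Matrix.linftyOpNormedRing Matrix.linftyOpNormedAlgebra

section NewtonKantorovich

theorem exists_mem_closedBall_eq_zero_of_norm_comp_fderiv_sub_id_le
    {E F : Type*} [NormedAddCommGroup E] [NormedSpace ℝ E] [CompleteSpace E]
    [NormedAddCommGroup F] [NormedSpace ℝ F]
    {f : E → F} {f' : E → E →L[ℝ] F} {A : F →L[ℝ] E} {b : E} {r : ℝ} {c : ℝ≥0}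
    (hA : Function.Injective A) (hr : 0 ≤ r)
    (hf : ∀ x ∈ closedBall b r, HasFDerivWithinAt f (f' x) (closedBall b r) x)
    (hc : ∀ x ∈ closedBall b r, ‖A ∘L f' x - .id ℝ E‖ ≤ c)
    (hb : ‖A (f b)‖ ≤ (1 - c) * r) :
    ∃ x ∈ closedBall b r, f x = 0 := by
  have happrox : ApproximatesLinearOn (A ∘ f) (.id ℝ E) (closedBall b r) c :=
    fun x hx y hy ↦ (convex_closedBall b r).norm_image_sub_le_of_norm_hasFDerivWithin_le'
      (fun z hz ↦ A.hasFDerivAt.comp_hasFDerivWithinAt z (hf z hz)) hc hy hx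
  let idInverse : (ContinuousLinearMap.id ℝ E).NonlinearRightInverse := ⟨id, 1, by simp, by simp⟩
  obtain ⟨x, hx, hfx⟩ : (0 : E) ∈ (A ∘ f) '' closedBall b r := by
    refine happrox.surjOn_closedBall_of_nonlinearRightInverse idInverse hr subset_rfl ?_
    simpa [idInverse] using hb
  exact ⟨x, hx, hA (hfx.trans (map_zero A).symm)⟩

variable {n : Type*} [Fintype n] [DecidableEq n]

theorem linfty_opNorm_le_iff {A : Matrix n n ℝ} {c : ℝ} (hc : 0 ≤ c) :
    ‖A‖ ≤ c ↔ ∀ i, ∑ j, |A i j| ≤ c := by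
  lift c to ℝ≥0 using hc
  rw [Matrix.linfty_opNorm_def, NNReal.coe_le_coe, Finset.sup_le_iff]
  simp [← NNReal.coe_le_coe]

theorem exists_mem_closedBall_eq_zero_of_approx_inverse
    {f : (n → ℝ) → n → ℝ} {f' : (n → ℝ) → Matrix n n ℝ} {A J : Matrix n n ℝ} {b : n → ℝ}
    {r δ : ℝ} {c : ℝ≥0} (hr : 0 ≤ r) (hc1 : c < 1)
    (hf : ∀ x ∈ closedBall b r, HasFDerivWithinAt f (f' x).mulVecLin.toContinuousLinearMap
      (closedBall b r) x)
    (hJ : ∀ x ∈ closedBall b r, ‖f' x - J‖ ≤ δ)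
    (hc : ‖A * J - 1‖ + ‖A‖ * δ ≤ c)
    (hb : ‖A‖ * ‖f b‖ ≤ (1 - c) * r) :
    ∃ x ∈ closedBall b r, f x = 0 := by
  have hclose : ∀ x ∈ closedBall b r, ‖A * f' x - 1‖ ≤ c := fun x hx ↦
    calc ‖A * f' x - 1‖ = ‖(A * J - 1) + A * (f' x - J)‖ := by congr 1; noncomm_ring
      _ ≤ ‖A * J - 1‖ + ‖A‖ * ‖f' x - J‖ := (norm_add_le _ _).trans (by grw [norm_mul_le])
      _ ≤ ‖A * J - 1‖ + ‖A‖ * δ := by grw [hJ x hx]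
      _ ≤ c := hc
  have hunit : IsUnit (A * f' b) := by
    rw [← sub_sub_cancel 1 (A * f' b)]
    apply isUnit_one_sub_of_norm_lt_one
    rw [norm_sub_rev]
    exact (hclose b (mem_closedBall_self hr)).trans_lt hc1
  have hinj : Function.Injective A.mulVecLin.toContinuousLinearMap :=
    Matrix.mulVec_injective_of_isUnit (isUnit_of_mul_isUnit_left hunit)
  refine exists_mem_closedBall_eq_zero_of_norm_comp_fderiv_sub_id_le hinj hr hf (fun x hx ↦ ?_)
    ((Matrix.linfty_opNorm_mulVec A (f b)).trans hb)
  convert hclose x hx using 1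
  rw [Matrix.linfty_opNorm_eq_opNorm]
  congr 1
  ext v i
  simp

end NewtonKantorovich

theorem closedBall_eq_Icc_pi {n : Type*} [Fintype n] (b : n → ℝ) {r : ℝ} (hr : 0 ≤ r) :
    closedBall b r = Icc (b - Function.const n r) (b + Function.const n r) := by
  simp only [closedBall_pi b hr, Real.closedBall_eq_Icc, pi_univ_Icc]
  rfl

theorem abs_sub_sub_le_of_monotoneOn {α : Type*} [Preorder α] {s : Set α} {p q : α → ℝ}
    (hp : MonotoneOn p s) (hq : MonotoneOn q s) {lo hi x : α} (hlo : lo ∈ s) (hhi : hi ∈ s)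
    (hxs : x ∈ s) (hx : x ∈ Icc lo hi) {c δ : ℝ} (hlower : c - δ ≤ p lo - q hi)
    (hupper : p hi - q lo ≤ c + δ) : |p x - q x - c| ≤ δ := by
  rw [abs_le]
  constructor <;> linarith [hp hlo hxs hx.1, hp hxs hhi hx.2, hq hlo hxs hx.1, hq hxs hhi hx.2]

/-- The map `F = (f1, f2, f3, f4)` in the coordinates `v = (u0, u1, x1, x2)`. -/
noncomputable def einsteinMap (v : Fin 4 → ℝ) : Fin 4 → ℝ :=
  ![f1 (v 0) (v 1) (v 2) (v 3), f2 (v 0) (v 1) (v 2) (v 3), f3 (v 0) (v 1) (v 2) (v 3),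
    f4 (v 0) (v 1) (v 2) (v 3)]

/-- The monomials with positive coefficients in the entries of the Jacobian of `einsteinMap`. -/
noncomputable def jacobianPos (v : Fin 4 → ℝ) : Matrix (Fin 4) (Fin 4) ℝ :=
  let u0 := v 0; let u1 := v 1; let x1 := v 2; let x2 := v 3
  !![9*u1*x1 ^ 2*x2 ^ 2 + 2*u1*x1 ^ 2 + u1*x2 ^ 2,
      9*u0*x1 ^ 2*x2 ^ 2 + 2*u0*x1 ^ 2 + u0*x2 ^ 2,
      18*u0*u1*x1*x2 ^ 2 + 4*u0*u1*x1,
      18*u0*u1*x1 ^ 2*x2 + 2*u0*u1*x2;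
    u1*x2,
      u0*x2 + 12*u1*x1 ^ 2*x2 + 30*u1*x2 + 6*x1*x2 ^ 2 + 6*x1 + 8*x2 ^ 2,
      12*u1 ^ 2*x1*x2 + 6*u1*x2 ^ 2 + 6*u1 + 24*x1*x2,
      u0*u1 + 6*u1 ^ 2*x1 ^ 2 + 15*u1 ^ 2 + 12*u1*x1*x2 + 16*u1*x2 + 12*x1 ^ 2;
    4*x1 ^ 2,
      0,
      8*u0*x1 + 54*x1 ^ 2*x2 + 48*x2 ^ 2 + 6*x2,
      18*x1 ^ 3 + 96*x1*x2 + 6*x1;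
    9*x1 ^ 2*x2 ^ 2,
      9*x1 ^ 2*x2 ^ 2,
      18*u0*x1*x2 ^ 2 + 18*u1*x1*x2 ^ 2 + 64*x1*x2 + 18*x2 ^ 3,
      18*u0*x1 ^ 2*x2 + 18*u1*x1 ^ 2*x2 + 32*x1 ^ 2 + 54*x1*x2 ^ 2 + 24*x2 ^ 2]

/-- The monomials with negative coefficients in the entries of the Jacobian of `einsteinMap`,
with their signs reversed. -/
noncomputable def jacobianNeg (v : Fin 4 → ℝ) : Matrix (Fin 4) (Fin 4) ℝ :=
  let u0 := v 0; let u1 := v 1; let x1 := v 2; let x2 := v 3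
  !![0,
      6*u1*x1 ^ 2*x2 ^ 2 + 6*u1*x2 ^ 2,
      6*u1 ^ 2*x1*x2 ^ 2 + 12*x1*x2 ^ 2,
      6*u1 ^ 2*x1 ^ 2*x2 + 6*u1 ^ 2*x2 + 12*x1 ^ 2*x2;
    0,
      6*x1 ^ 3 + 48*x1*x2,
      18*u1*x1 ^ 2 + 48*u1*x2,
      48*u1*x1;
    x2 ^ 2,
      9*x2 ^ 2,
      64*x1*x2 + 18*x2 ^ 3,
      2*u0*x2 + 18*u1*x2 + 32*x1 ^ 2 + 54*x1*x2 ^ 2 + 48*x2 ^ 2;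
    4*x1 ^ 2,
      0,
      8*u0*x1 + 18*x1 ^ 2*x2 + 96*x1*x2 ^ 2 + 18*x2,
      6*x1 ^ 3 + 96*x1 ^ 2*x2 + 18*x1]

theorem hasFDerivAt_einsteinMap (v : Fin 4 → ℝ) :
    HasFDerivAt einsteinMap (jacobianPos v - jacobianNeg v).mulVecLin.toContinuousLinearMap v := by
  have fderiv_coord (i : Fin 4) : fderiv ℝ (fun w : Fin 4 → ℝ ↦ w i) v = .proj i :=
    (hasFDerivAt_apply i v).fderiv
  rw [hasFDerivAt_pi']
  intro i
  fin_cases i <;>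
  · simp only [einsteinMap, f1, f2, f3, f4, Fin.isValue, Fin.mk_one, Fin.zero_eta,
      Fin.reduceFinMk, Matrix.cons_val]
    refine (DifferentiableAt.hasFDerivAt (by fun_prop)).congr_fderiv ?_
    ext w
    simp (disch := fun_prop) only [fderiv_fun_add, fderiv_fun_sub, fderiv_fun_mul, fderiv_fun_pow,
      fderiv_const_apply, fderiv_coord]
    simp only [jacobianPos, jacobianNeg, ContinuousLinearMap.comp_apply,
      LinearMap.coe_toContinuousLinearMap', Matrix.mulVecBilin_apply, Matrix.mulVec_eq_sum,
      Fin.sum_univ_four, Pi.add_apply, Pi.smul_apply, Matrix.transpose_apply, Matrix.sub_apply,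
      Matrix.of_apply, Matrix.cons_val, ContinuousLinearMap.proj_apply, add_apply, sub_apply,
      smul_apply, zero_apply, op_smul_eq_smul, smul_eq_mul, nsmul_eq_mul, Nat.cast_ofNat]
    ring

theorem monotoneOn_jacobianPos (i j : Fin 4) :
    MonotoneOn (fun v ↦ jacobianPos v i j) (Ici 0) := by
  intro v (hv : 0 ≤ v) w (hw : 0 ≤ w) hvw
  have ⟨_, _, _, _⟩ : 0 ≤ v 0 ∧ 0 ≤ v 1 ∧ 0 ≤ v 2 ∧ 0 ≤ v 3 := ⟨hv 0, hv 1, hv 2, hv 3⟩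
  have ⟨_, _, _, _⟩ : 0 ≤ w 0 ∧ 0 ≤ w 1 ∧ 0 ≤ w 2 ∧ 0 ≤ w 3 := ⟨hw 0, hw 1, hw 2, hw 3⟩
  fin_cases i <;> fin_cases j <;> simp only [jacobianPos, Fin.isValue, Fin.mk_one, Fin.zero_eta,
    Fin.reduceFinMk, Matrix.of_apply, Matrix.cons_val] <;> gcongr <;> apply hvw

theorem monotoneOn_jacobianNeg (i j : Fin 4) :
    MonotoneOn (fun v ↦ jacobianNeg v i j) (Ici 0) := by
  intro v (hv : 0 ≤ v) w (hw : 0 ≤ w) hvw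
  have ⟨_, _, _, _⟩ : 0 ≤ v 0 ∧ 0 ≤ v 1 ∧ 0 ≤ v 2 ∧ 0 ≤ v 3 := ⟨hv 0, hv 1, hv 2, hv 3⟩
  have ⟨_, _, _, _⟩ : 0 ≤ w 0 ∧ 0 ≤ w 1 ∧ 0 ≤ w 2 ∧ 0 ≤ w 3 := ⟨hw 0, hw 1, hw 2, hw 3⟩
  fin_cases i <;> fin_cases j <;> simp only [jacobianNeg, Fin.isValue, Fin.mk_one, Fin.zero_eta,
    Fin.reduceFinMk, Matrix.of_apply, Matrix.cons_val] <;> gcongr <;> apply hvw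

/-- A zero of `einsteinMap` found by Newton iteration, rounded to seven decimal places. -/
noncomputable def approxZero : Fin 4 → ℝ := ![1.0851961, 0.6992949, 0.9324595, 1.0225069]

/-- The Jacobian of `einsteinMap` at `approxZero`, rounded to two decimal places. -/
noncomputable def approxJacobian : Matrix (Fin 4) (Fin 4) ℝ :=
  !![7.67, 3.70, 1.59, -2.58;
    0.72, -0.80, -8.21, 9.22;
    2.43, -9.41, 32.16, -34.02;
    4.70, 8.18, -24.52, 27.12]

/-- The inverse of the Jacobian of `einsteinMap` at `approxZero`, rounded to three decimal
places. -/
noncomputable def approxInverse : Matrix (Fin 4) (Fin 4) ℝ :=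
  !![0.097, 0.131, 0.039, 0.014;
    -0.044, -0.332, 0.007, 0.118;
    -0.549, -0.573, 0.474, 0.737;
    -0.500, -0.441, 0.419, 0.665]

theorem norm_approxInverse_le : ‖approxInverse‖ ≤ 2.4 := by
  rw [linfty_opNorm_le_iff (by norm_num)]
  intro i
  fin_cases i <;>
  · simp only [approxInverse, Fin.isValue, Fin.mk_one, Fin.zero_eta, Fin.reduceFinMk,
      Matrix.of_apply, Matrix.cons_val, Fin.sum_univ_four]
    norm_num

theorem norm_approxInverse_mul_approxJacobian_sub_one_le :
    ‖approxInverse * approxJacobian - 1‖ ≤ 0.05 := by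
  rw [linfty_opNorm_le_iff (by norm_num)]
  intro i
  fin_cases i <;>
  · simp only [approxInverse, approxJacobian, Matrix.sub_apply, Matrix.mul_apply,
      Matrix.one_apply, Fin.isValue, Fin.mk_one, Fin.zero_eta, Fin.reduceFinMk, Fin.reduceEq,
      Matrix.of_apply, Matrix.cons_val, Fin.sum_univ_four]
    norm_num

theorem norm_einsteinMap_approxZero_le : ‖einsteinMap approxZero‖ ≤ 0.000002 := by
  rw [pi_norm_le_iff_of_nonneg (by norm_num)]
  intro i
  fin_cases i <;>
  · simp only [einsteinMap, approxZero, f1, f2, f3, f4, Fin.isValue, Fin.mk_one, Fin.zero_eta,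
      Fin.reduceFinMk, Matrix.cons_val]
    norm_num

theorem abs_jacobian_sub_approxJacobian_le {v : Fin 4 → ℝ}
    (hv : v ∈ closedBall approxZero 0.00001) (i j : Fin 4) :
    |jacobianPos v i j - jacobianNeg v i j - approxJacobian i j| ≤ 0.02 := by
  rw [closedBall_eq_Icc_pi approxZero (by norm_num)] at hv
  have hlo : approxZero - Function.const _ 0.00001 ∈ Ici 0 := by
    intro i
    fin_cases i <;>
    · simp only [approxZero, Pi.sub_apply, Function.const_apply, Pi.zero_apply, Fin.isValue,
        Fin.mk_one, Fin.zero_eta, Fin.reduceFinMk, Matrix.cons_val]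
      norm_num
  refine abs_sub_sub_le_of_monotoneOn (monotoneOn_jacobianPos i j) (monotoneOn_jacobianNeg i j)
    hlo (le_trans hlo (hv.1.trans hv.2)) (le_trans hlo hv.1) hv ?_ ?_ <;>
  fin_cases i <;> fin_cases j <;>
  · simp only [jacobianPos, jacobianNeg, approxJacobian, approxZero, Pi.sub_apply, Pi.add_apply,
      Function.const_apply, Fin.isValue, Fin.mk_one, Fin.zero_eta, Fin.reduceFinMk,
      Matrix.of_apply, Matrix.cons_val]
    norm_num

theorem norm_jacobian_sub_approxJacobian_le {v : Fin 4 → ℝ}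
    (hv : v ∈ closedBall approxZero 0.00001) :
    ‖jacobianPos v - jacobianNeg v - approxJacobian‖ ≤ 0.08 := by
  rw [linfty_opNorm_le_iff (by norm_num)]
  intro i
  calc ∑ j, |jacobianPos v i j - jacobianNeg v i j - approxJacobian i j|
      ≤ ∑ _j : Fin 4, (0.02 : ℝ) :=
        Finset.sum_le_sum fun j _ ↦ abs_jacobian_sub_approxJacobian_le hv i j
    _ = 0.08 := by norm_num

theorem exists_mem_closedBall_approxZero_einsteinMap_eq_zero :
    ∃ v ∈ closedBall approxZero 0.00001, einsteinMap v = 0 := by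
  refine exists_mem_closedBall_eq_zero_of_approx_inverse (A := approxInverse)
    (J := approxJacobian) (δ := 0.08) (c := 1 / 2) (by norm_num) (by norm_num)
    (fun v _ ↦ (hasFDerivAt_einsteinMap v).hasFDerivWithinAt)
    (fun v ↦ norm_jacobian_sub_approxJacobian_le) ?_ ?_
  · grw [norm_approxInverse_mul_approxJacobian_sub_one_le, norm_approxInverse_le]
    norm_num
  · grw [norm_approxInverse_le, norm_einsteinMap_approxZero_le]
    norm_num

theorem stmt0 :
    ∃ u0 u1 x1 x2 : ℝ,
      1.08 < u0 ∧ u0 < 1.09 ∧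
      0.69 < u1 ∧ u1 < 0.70 ∧
      0.93 < x1 ∧ x1 < 0.94 ∧
      1.02 < x2 ∧ x2 < 1.03 ∧
      (f1 u0 u1 x1 x2 = 0 ∧ f2 u0 u1 x1 x2 = 0 ∧ f3 u0 u1 x1 x2 = 0 ∧ f4 u0 u1 x1 x2 = 0) ∧
      u0 ≠ x2 ∧ x1 ≠ 1 ∧ x1 ≠ x2 := by
  obtain ⟨v, hv, hzero⟩ := exists_mem_closedBall_approxZero_einsteinMap_eq_zero
  have hf : f1 (v 0) (v 1) (v 2) (v 3) = 0 ∧ f2 (v 0) (v 1) (v 2) (v 3) = 0 ∧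
      f3 (v 0) (v 1) (v 2) (v 3) = 0 ∧ f4 (v 0) (v 1) (v 2) (v 3) = 0 :=
    ⟨congrFun hzero 0, congrFun hzero 1, congrFun hzero 2, congrFun hzero 3⟩
  have hdist (i : Fin 4) : |v i - approxZero i| ≤ 0.00001 :=
    (norm_le_pi_norm (v - approxZero) i).trans (mem_closedBall_iff_norm.1 hv)
  have hu0 : |v 0 - 1.0851961| ≤ 0.00001 := hdist 0
  have hu1 : |v 1 - 0.6992949| ≤ 0.00001 := hdist 1
  have hx1 : |v 2 - 0.9324595| ≤ 0.00001 := hdist 2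
  have hx2 : |v 3 - 1.0225069| ≤ 0.00001 := hdist 3
  rw [abs_le] at hu0 hu1 hx1 hx2
  refine ⟨v 0, v 1, v 2, v 3, ?_, ?_, ?_, ?_, ?_, ?_, ?_, ?_, hf, ne_of_gt ?_, ne_of_lt ?_,
    ne_of_lt ?_⟩ <;> linarith
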